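/- Let p be a prime number, let A be an integral domain of characteristic p that is finitely generated as an algebra over 𝔽_p and has Krull dimension 1, let B be a finitely generated 𝔽_p-algebra, and let φ, ψ : B → A be ring homomorphisms. Then there exists a constant c (a natural number) such that for every natural number m and every finite field F of characteristic p the following holds: if frob_A^m ∘ φ ≠ ψ, then the number of ring homomorphisms x : A → F satisfying x ∘ frob_A^m ∘ φ = x ∘ ψ is at most c · p^m. Here frob_A : A → A is the Frobenius ring homomorphism a ↦ a^p. -/

import Mathlib

/-!
If `A` is a field, every point of `A` is injective and there is nothing to count. Otherwise, by
Noether normalization, `A` is free of finite rank over a polynomial ring `k[X]`, `k = 𝔽_p`. For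
`0 ≠ a : A` the quotient `A ⧸ (a)` has `k`-dimension the degree of the norm `N a`, and by linear
independence of characters this dimension bounds the number of points of `A` at which `a` vanishes.
Two homomorphisms out of `B` that differ already differ at one of finitely many generators `y`, so
it remains to bound `deg N (φ y ^ q - ψ y)` for `q = p ^ m`. This norm is the determinant of a
matrix of fixed size whose entries have degree linear in `q`, hence its degree is linear in `q` too.
-/

open Polynomial

section Dimension

theorem ringKrullDim_le_of_isIntegral (R S : Type*) [CommRing R] [CommRing S] [Algebra R S]
    [Algebra.IsIntegral R S] [FaithfulSMul R S] : ringKrullDim R ≤ ringKrullDim S := by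
  refine iSup_le fun l => ?_
  obtain ⟨Q, hQ, hQl⟩ := (inferInstance : Nonempty (l.head.asIdeal.primesOver S))
  obtain ⟨L, hL, -, -⟩ := Ideal.exists_ltSeries_of_hasGoingUp l Q
  exact hL ▸ Order.LTSeries.length_le_krullDim L

theorem exists_polynomial_algHom_injective_finite (k A : Type*) [Field k] [CommRing A] [IsDomain A]
    [Algebra k A] [Algebra.FiniteType k A] (hdim : ringKrullDim A ≤ 1) (hA : ¬ IsField A) :
    ∃ g : k[X] →ₐ[k] A, Function.Injective g ∧ g.Finite := by
  obtain ⟨s, g, hg, hfin⟩ := exists_finite_inj_algHom_of_fg k A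
  algebraize [g.toRingHom]
  have : Module.Finite (MvPolynomial (Fin s) k) A := hfin
  have : FaithfulSMul (MvPolynomial (Fin s) k) A :=
    (faithfulSMul_iff_algebraMap_injective _ _).2 hg
  have hs_le : s ≤ 1 := by
    have hle := (ringKrullDim_le_of_isIntegral (MvPolynomial (Fin s) k) A).trans hdim
    rw [MvPolynomial.ringKrullDim_of_isNoetherianRing, ringKrullDim_eq_zero_of_field, zero_add,
      Nat.card_fin] at hle
    exact_mod_cast hle
  have hs_ne : s ≠ 0 := by
    rintro rfl
    exact hA (isField_of_isIntegral_of_isField'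
      ((MvPolynomial.isEmptyRingEquiv k (Fin 0)).toMulEquiv.isField (Field.toIsField k)))
  obtain rfl : s = 1 := by omega
  let e := (MvPolynomial.uniqueAlgEquiv k (Fin 1)).symm
  exact ⟨g.comp e, hg.comp e.injective, hfin.comp (.of_surjective _ e.surjective)⟩

end Dimension

section NormDegree

section Matrix

variable {R ι : Type*} [Fintype ι] [DecidableEq ι] {d : ℕ}

theorem natDegree_matrix_pow_apply_le [Semiring R] {M : Matrix ι ι R[X]}
    (hM : ∀ i j, (M i j).natDegree ≤ d) (q : ℕ) (i j : ι) :
    ((M ^ q) i j).natDegree ≤ q * d := by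
  induction q generalizing j with
  | zero =>
    rw [pow_zero, Matrix.one_apply]
    split_ifs <;> simp
  | succ q ih =>
    rw [pow_succ, Matrix.mul_apply, add_one_mul]
    exact natDegree_sum_le_of_forall_le _ _ fun l _ => natDegree_mul_le_of_le (ih l) (hM l j)

theorem natDegree_matrix_det_le [CommRing R] {M : Matrix ι ι R[X]}
    (hM : ∀ i j, (M i j).natDegree ≤ d) :
    M.det.natDegree ≤ Fintype.card ι * d := by
  rw [Matrix.det_apply]
  refine natDegree_sum_le_of_forall_le _ _ fun σ _ => ?_
  calc (Equiv.Perm.sign σ • ∏ i, M (σ i) i).natDegree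
      ≤ (∏ i, M (σ i) i).natDegree := natDegree_smul_le _ _
    _ ≤ ∑ i, (M (σ i) i).natDegree := natDegree_prod_le _ _
    _ ≤ Fintype.card ι * d := by
      simpa using Finset.sum_le_card_nsmul Finset.univ _ d fun i _ => hM (σ i) i

end Matrix

theorem exists_natDegree_norm_pow_sub_le {R A : Type*} [CommRing R] [CommRing A] [Algebra R[X] A]
    [Module.Free R[X] A] [Module.Finite R[X] A] (a b : A) :
    ∃ c : ℕ, ∀ q ≠ 0, (Algebra.norm R[X] (a ^ q - b)).natDegree ≤ c * q := by
  classical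
  nontriviality R
  let B := Module.Free.chooseBasis R[X] A
  let L := Algebra.leftMulMatrix B
  obtain ⟨d, hd⟩ := Finite.exists_le fun ij : _ × _ =>
    max (L a ij.1 ij.2).natDegree (L b ij.1 ij.2).natDegree
  refine ⟨Fintype.card (Module.Free.ChooseBasisIndex R[X] A) * d, fun q hq => ?_⟩
  rw [Algebra.norm_eq_matrix_det B, mul_assoc, mul_comm d]
  refine natDegree_matrix_det_le fun i j => ?_
  rw [map_sub, map_pow, Matrix.sub_apply]
  refine (natDegree_sub_le _ _).trans (max_le ?_ ?_)
  · exact natDegree_matrix_pow_apply_le (fun i j => (le_max_left _ _).trans (hd (i, j))) q i j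
  · exact ((le_max_right _ _).trans (hd (i, j))).trans
      (Nat.le_mul_of_pos_left d (Nat.pos_of_ne_zero hq))

end NormDegree

section Points

variable {k A L : Type*} [CommRing A] [CommRing L] [IsDomain L]

theorem encard_algHom_vanishing_le_finrank [CommRing k] [Algebra k A] [Algebra k L] (I : Ideal A)
    [Module.Free k (A ⧸ I)] [Module.Finite k (A ⧸ I)] :
    {x : A →ₐ[k] L | ∀ a ∈ I, x a = 0}.encard ≤ Module.finrank k (A ⧸ I) := by
  let descend : {x : A →ₐ[k] L | ∀ a ∈ I, x a = 0} → (A ⧸ I →ₐ[k] L) :=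
    fun x => Ideal.Quotient.liftₐ I x.1 x.2
  have descend_injective : Function.Injective descend := fun x y hxy =>
    Subtype.ext (AlgHom.ext fun a => DFunLike.congr_fun hxy (Ideal.Quotient.mk I a))
  calc {x : A →ₐ[k] L | ∀ a ∈ I, x a = 0}.encard
      ≤ ENat.card (A ⧸ I →ₐ[k] L) := ENat.card_le_card_of_injective descend_injective
    _ = Nat.card (A ⧸ I →ₐ[k] L) := ENat.card_eq_coe_natCard _
    _ ≤ Module.finrank k (A ⧸ I) := by exact_mod_cast card_algHom_le_finrank k (A ⧸ I) L

variable [Field k] [IsDomain A] [Algebra k A] [Algebra k[X] A] [IsScalarTower k k[X] A]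
  [Module.Free k[X] A] [Module.Finite k[X] A]

theorem finite_quotient_of_finite_free_polynomial {I : Ideal A} (hI : I ≠ ⊥) :
    Module.Finite k (A ⧸ I) :=
  Module.Finite.equiv (Ideal.quotientEquivDirectSum k (Module.Free.chooseBasis k[X] A) hI).symm

theorem encard_algHom_apply_eq_zero_le_natDegree_norm [Algebra k L] {a : A} (ha : a ≠ 0) :
    {x : A →ₐ[k] L | x a = 0}.encard ≤ (Algebra.norm k[X] a).natDegree := by
  have := finite_quotient_of_finite_free_polynomial (k := k)
    ((Ideal.span_singleton_eq_bot (x := a)).not.2 ha)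
  rw [← finrank_quotient_span_eq_natDegree_norm (Module.Free.chooseBasis k[X] A) ha]
  refine le_trans (Set.encard_le_encard ?_) (encard_algHom_vanishing_le_finrank (Ideal.span {a}))
  intro x (hx : x a = 0) b hb
  obtain ⟨c, rfl⟩ := Ideal.mem_span_singleton.1 hb
  rw [map_mul, hx, zero_mul]

end Points

theorem exists_encard_algHom_pow_eq_le (k : Type*) {A : Type*} [Field k] [CommRing A] [IsDomain A]
    [Algebra k A] [Algebra.FiniteType k A] (hdim : ringKrullDim A ≤ 1) (a b : A) :
    ∃ c : ℕ, ∀ (q : ℕ) (L : Type*) [CommRing L] [IsDomain L] [Algebra k L], q ≠ 0 → a ^ q ≠ b →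
      {x : A →ₐ[k] L | x (a ^ q) = x b}.encard ≤ (c * q : ℕ) := by
  by_cases hA : IsField A
  · refine ⟨0, fun q L _ _ _ _ hab => ?_⟩
    have : IsSimpleRing A := (isSimpleRing_iff_isField A).2 hA
    have hempty : {x : A →ₐ[k] L | x (a ^ q) = x b} = ∅ :=
      Set.eq_empty_of_forall_notMem fun x hx => hab (x.toRingHom.injective hx)
    rw [hempty, Set.encard_empty]
    exact zero_le
  obtain ⟨g, hg, hfin⟩ := exists_polynomial_algHom_injective_finite k A hdim hA
  algebraize [g.toRingHom]
  have : Module.Finite k[X] A := hfin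
  have : FaithfulSMul k[X] A := (faithfulSMul_iff_algebraMap_injective _ _).2 hg
  obtain ⟨c, hc⟩ := exists_natDegree_norm_pow_sub_le (R := k) a b
  refine ⟨c, fun q L _ _ _ hq hab => ?_⟩
  calc {x : A →ₐ[k] L | x (a ^ q) = x b}.encard
      = {x : A →ₐ[k] L | x (a ^ q - b) = 0}.encard := by simp only [map_sub, sub_eq_zero]
    _ ≤ (Algebra.norm k[X] (a ^ q - b)).natDegree :=
      encard_algHom_apply_eq_zero_le_natDegree_norm (sub_ne_zero.2 hab)
    _ ≤ (c * q : ℕ) := by exact_mod_cast hc q hq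

section ZModAlgebra

variable {n : ℕ} {R S : Type*}

/-- A ring homomorphism between `ℤ/n`-algebras, as the `ℤ/n`-algebra homomorphism it is; this
identifies the points `A →+* F` with the algebra homomorphisms counted over the prime field. -/
def zmodAlgHom [Ring R] [Ring S] [Algebra (ZMod n) R] [Algebra (ZMod n) S] (f : R →+* S) :
    R →ₐ[ZMod n] S where
  __ := f
  commutes' := RingHom.congr_fun (Subsingleton.elim (f.comp (algebraMap (ZMod n) R)) _)

theorem ringHom_ext_of_adjoin_zmod_eq_top [Ring R] [Ring S] [Algebra (ZMod n) R]
    [Algebra (ZMod n) S] {s : Set R} (hs : Algebra.adjoin (ZMod n) s = ⊤) {f g : R →+* S}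
    (h : Set.EqOn f g s) : f = g :=
  congrArg AlgHom.toRingHom
    (AlgHom.ext_of_adjoin_eq_top hs h : zmodAlgHom (n := n) f = zmodAlgHom g)

theorem encard_ringHom_le_encard_algHom_zmod [Ring R] [Ring S] [Algebra (ZMod n) R]
    [Algebra (ZMod n) S] (P : (R → S) → Prop) :
    {x : R →+* S | P x}.encard ≤ {x : R →ₐ[ZMod n] S | P x}.encard :=
  Set.encard_le_encard_of_injOn (f := zmodAlgHom) (fun _ hx => hx)
    fun _ _ _ _ h => congrArg AlgHom.toRingHom h

end ZModAlgebra

theorem card_coincidence_points_le_general (p : ℕ) [Fact p.Prime] (A B : Type*) [CommRing A]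
    [IsDomain A] [CharP A p] [Algebra (ZMod p) A] [Algebra.FiniteType (ZMod p) A]
    (hdim : ringKrullDim A ≤ 1) [CommRing B] [Algebra (ZMod p) B] [Algebra.FiniteType (ZMod p) B]
    (φ ψ : B →+* A) :
    ∃ c : ℕ, ∀ (m : ℕ) (F : Type*) [CommRing F] [IsDomain F] [CharP F p],
      (iterateFrobenius A p m).comp φ ≠ ψ →
        {x : A →+* F | x.comp ((iterateFrobenius A p m).comp φ) = x.comp ψ}.encard ≤
          (c * p ^ m : ℕ) := by
  obtain ⟨s, hs⟩ := Algebra.FiniteType.out (R := ZMod p) (A := B)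
  choose c hc using fun y => exists_encard_algHom_pow_eq_le (ZMod p) hdim (φ y) (ψ y)
  refine ⟨s.sup c, fun m F _ _ _ hne => ?_⟩
  obtain ⟨y, hys, hy⟩ : ∃ y ∈ s, φ y ^ p ^ m ≠ ψ y := by
    by_contra! hagree
    exact hne (ringHom_ext_of_adjoin_zmod_eq_top hs hagree)
  let := ZMod.algebra F p
  calc {x : A →+* F | x.comp ((iterateFrobenius A p m).comp φ) = x.comp ψ}.encard
      ≤ {x : A →+* F | x (φ y ^ p ^ m) = x (ψ y)}.encard :=
      Set.encard_le_encard fun x hx => RingHom.congr_fun hx y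
    _ ≤ {x : A →ₐ[ZMod p] F | x (φ y ^ p ^ m) = x (ψ y)}.encard :=
      encard_ringHom_le_encard_algHom_zmod fun x => x (φ y ^ p ^ m) = x (ψ y)
    _ ≤ (c y * p ^ m : ℕ) := hc y _ F (pow_ne_zero m (Fact.out : p.Prime).ne_zero) hy
    _ ≤ (s.sup c * p ^ m : ℕ) := by
      exact_mod_cast Nat.mul_le_mul_right _ (Finset.le_sup hys)

/-- Let `A` be an integral domain of characteristic `p`, finitely generated
over `𝔽_p` and of Krull dimension `1`, `B` a finitely generated `𝔽_p`-algebra, and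
`φ ψ : B →+* A`. Then there is a constant `c` such that for every `m : ℕ` and every finite
field `F` of characteristic `p`: if `frob_A^m ∘ φ ≠ ψ`, the number of ring homomorphisms
`x : A →+* F` with `x ∘ frob_A^m ∘ φ = x ∘ ψ` is at most `c * p ^ m`. -/
theorem card_coincidence_points_le
    (p : ℕ) [Fact p.Prime]
    (A B : Type*) [CommRing A] [IsDomain A] [CharP A p]
    [Algebra (ZMod p) A] [Algebra.FiniteType (ZMod p) A]
    (hdim : ringKrullDim A = 1)
    [CommRing B] [Algebra (ZMod p) B] [Algebra.FiniteType (ZMod p) B]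
    (φ ψ : B →+* A) :
    ∃ c : ℕ, ∀ (m : ℕ) (F : Type) (_ : Field F) (_ : Finite F) (_ : CharP F p),
      (iterateFrobenius A p m).comp φ ≠ ψ →
        {x : A →+* F | x.comp ((iterateFrobenius A p m).comp φ) = x.comp ψ}.Finite ∧
          Nat.card {x : A →+* F | x.comp ((iterateFrobenius A p m).comp φ) = x.comp ψ} ≤
            c * p ^ m := by
  obtain ⟨c, hc⟩ := card_coincidence_points_le_general p A B hdim.le φ ψ
  exact ⟨c, fun m F _ _ _ hne => Set.encard_le_coe_iff_finite_ncard_le.1 (hc m F hne)⟩
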